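/- Suppose 0 < r < p < ∞. There is a constant c = c(r, p) such that whenever ‖·‖_X is an admissible extended-value quasinorm on the Borel functions of a compact Hausdorff space satisfying an upper p-estimate (constant 1) and a lower q-estimate (constant 1), where q/p = 1 + θ with 0 < θ < 1, the r-convexity constant satisfies log M^{(r)}(X) ≤ θ (c + (1/p)|log θ|). -/

import Mathlib

open Set Filter Topology MeasureTheory ENNReal

/-- An admissible extended-value quasinorm on the Borel functions of `Ω`. -/
structure AdmissibleQuasinorm (Ω : Type*) [TopologicalSpace Ω] [MeasurableSpace Ω] where
  N : (Ω → ℝ) → ℝ≥0∞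
  mono : ∀ f g : Ω → ℝ, Measurable f → Measurable g →
    (∀ x, |f x| ≤ |g x|) → N f ≤ N g
  smul : ∀ (α : ℝ) (f : Ω → ℝ), Measurable f →
    N (fun x => α * f x) = ENNReal.ofReal |α| * N f
  quasi : ∃ C : ℝ≥0∞, ∀ f g : Ω → ℝ, Measurable f → Measurable g →
    (∀ x, 0 ≤ f x) → (∀ x, 0 ≤ g x) → (∀ x, f x = 0 ∨ g x = 0) →
    N (fun x => f x + g x) ≤ C * (N f + N g)
  exists_pos : ∃ u : Ω → ℝ, Measurable u ∧ (∀ x, 0 < u x) ∧ 0 < N u ∧ N u < ⊤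
  (cont : ∀ (f : ℕ → Ω → ℝ) (g : Ω → ℝ), (∀ n, Measurable (f n)) → Measurable g →
    (∀ n x, 0 ≤ f n x) → (∀ n x, f n x ≤ f (n + 1) x) →
    (∀ x, Tendsto (fun n => f n x) atTop (𝓝 (g x))) →
    Tendsto (fun n => N (f n)) atTop (𝓝 (N g)))

/-- `f₁, …, fₙ` are disjointly supported. -/
def DisjSupp {Ω : Type*} {n : ℕ} (f : Fin n → Ω → ℝ) : Prop :=
  ∀ i j, i ≠ j → ∀ x, f i x = 0 ∨ f j x = 0

/-- A crude upper `p`-estimate with constant `a`. -/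
def CrudeUpper {Ω : Type*} [TopologicalSpace Ω] [MeasurableSpace Ω]
    (X : AdmissibleQuasinorm Ω) (p a : ℝ) : Prop :=
  ∀ (n : ℕ) (f : Fin n → Ω → ℝ), (∀ i, Measurable (f i)) → DisjSupp f →
    X.N (fun x => ∑ i, f i x) ≤ ENNReal.ofReal a * (∑ i, X.N (f i) ^ p) ^ (1 / p)

/-- A crude lower `q`-estimate with constant `b`. -/
def CrudeLower {Ω : Type*} [TopologicalSpace Ω] [MeasurableSpace Ω]
    (X : AdmissibleQuasinorm Ω) (q b : ℝ) : Prop :=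
  ∀ (n : ℕ) (f : Fin n → Ω → ℝ), (∀ i, Measurable (f i)) → DisjSupp f →
    (∑ i, X.N (f i) ^ q) ^ (1 / q) ≤ ENNReal.ofReal b * X.N (fun x => ∑ i, f i x)


theorem rcb_holder {ι : Type*} (s : Finset ι) (l a b : ι → ℝ) (t : ℝ) (ht0 : 0 < t) (ht1 : t < 1)
    (hl : ∀ i ∈ s, 0 ≤ l i) (ha : ∀ i ∈ s, 0 ≤ a i) (hb : ∀ i ∈ s, 0 ≤ b i) :
    ∑ i ∈ s, l i * (a i ^ (1 - t) * b i ^ t) ≤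
      (∑ i ∈ s, l i * a i) ^ (1 - t) * (∑ i ∈ s, l i * b i) ^ t := by
  have hpq : Real.HolderConjugate (1 / (1 - t)) (1 / t) := by
    rw [Real.holderConjugate_iff]
    constructor
    · rw [lt_div_iff₀ (by linarith)]; linarith
    · simp
  have := Real.inner_le_Lp_mul_Lq_of_nonneg s hpq (f := fun i => (l i * a i) ^ (1 - t))
    (g := fun i => (l i * b i) ^ t)
    (fun i hi => Real.rpow_nonneg (mul_nonneg (hl i hi) (ha i hi)) _)
    (fun i hi => Real.rpow_nonneg (mul_nonneg (hl i hi) (hb i hi)) _)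
  have e1 : ∀ i ∈ s, ((l i * a i) ^ (1 - t)) ^ (1 / (1 - t)) = l i * a i := by
    intro i hi
    rw [one_div, Real.rpow_rpow_inv (mul_nonneg (hl i hi) (ha i hi)) (by linarith)]
  have e2 : ∀ i ∈ s, ((l i * b i) ^ t) ^ (1 / t) = l i * b i := by
    intro i hi
    rw [one_div, Real.rpow_rpow_inv (mul_nonneg (hl i hi) (hb i hi)) (by linarith)]
  rw [Finset.sum_congr rfl e1, Finset.sum_congr rfl e2, one_div_one_div, one_div_one_div] at this
  refine le_trans (le_of_eq (Finset.sum_congr rfl ?_)) this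
  intro i hi
  rw [Real.mul_rpow (hl i hi) (ha i hi), Real.mul_rpow (hl i hi) (hb i hi)]
  rcases (hl i hi).eq_or_lt with h | h
  · rw [← h, Real.zero_rpow ht0.ne']; ring
  · have : l i ^ (1 - t) * l i ^ t = l i := by
      rw [← Real.rpow_add h]; simp
    calc _ = (l i ^ (1 - t) * l i ^ t) * (a i ^ (1 - t) * b i ^ t) := by rw [this]
      _ = _ := by ring

theorem rcb_sep {S : Type*} [Fintype S] [DecidableEq S] (φ : Finset S → ℝ)
    (h0 : 0 ≤ φ ∅) (hpos : ∀ A : Finset S, A.Nonempty → 0 < φ A) (hS : Nonempty S) :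
    ∃ (μ : S → ℝ) (l : Finset S → ℝ) (κ : ℝ), (∀ x, 0 ≤ μ x) ∧ (∀ A, ∑ x ∈ A, μ x ≤ φ A) ∧
      (∀ A, 0 ≤ l A) ∧ (∑ A, l A = 1) ∧ 0 < κ ∧ (∀ A, l A ≠ 0 → ∑ x ∈ A, μ x = φ A) ∧
      (∀ x, κ ≤ ∑ A, l A * (if x ∈ A then 1 else 0)) ∧
      (∀ x, 0 < μ x → ∑ A, l A * (if x ∈ A then 1 else 0) = κ) := by
  classical
  let P : Set (S → ℝ) := {μ | (∀ x, 0 ≤ μ x) ∧ ∀ A : Finset S, ∑ x ∈ A, μ x ≤ φ A}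
  have hPc : IsClosed P := by
    have : P = (⋂ x, {μ | 0 ≤ μ x}) ∩ ⋂ A : Finset S, {μ | ∑ x ∈ A, μ x ≤ φ A} := by
      ext μ; simp [P]
    rw [this]
    refine IsClosed.inter (isClosed_iInter fun x => ?_) (isClosed_iInter fun A => ?_)
    · exact isClosed_le (by fun_prop) (by fun_prop)
    · exact isClosed_le (by fun_prop) (by fun_prop)
  have hPk : IsCompact P := by
    refine IsCompact.of_isClosed_subset (isCompact_Icc (a := (0 : S → ℝ)) (b := fun x => φ {x})) hPc ?_
    rintro μ ⟨h1, h2⟩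
    refine ⟨fun x => h1 x, fun x => ?_⟩
    simpa using h2 {x}
  have hPn : P.Nonempty := by
    refine ⟨0, fun x => le_rfl, fun A => ?_⟩
    rcases A.eq_empty_or_nonempty with h | h
    · simpa [h] using h0
    · simpa using (hpos A h).le
  obtain ⟨μ, ⟨hμ0, hμ1⟩, hmax⟩ := hPk.exists_isMaxOn hPn
    (f := fun μ => ∑ x, μ x) (Continuous.continuousOn (by fun_prop))
  let T : Set (Finset S) := {A | A.Nonempty ∧ ∑ x ∈ A, μ x = φ A}
  let L : (Finset S → ℝ) →ₗ[ℝ] (S → ℝ) :=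
    { toFun := fun l x => ∑ A, l A * (if x ∈ A then 1 else 0)
      map_add' := by intro a b; ext x; simp only [Pi.add_apply, add_mul, Finset.sum_add_distrib]
      map_smul' := by intro a b; ext x; simp [Finset.mul_sum] }
  let Λ : Set (Finset S → ℝ) := stdSimplex ℝ (Finset S) ∩ {l | ∀ A, A ∉ T → l A = 0}
  have hΛc : IsCompact Λ := by
    refine (isCompact_stdSimplex ℝ (Finset S)).inter_right ?_
    have : {l : Finset S → ℝ | ∀ A, A ∉ T → l A = 0} = ⋂ A, ⋂ (_ : A ∉ T), {l | l A = 0} := by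
      ext l; simp
    rw [this]
    exact isClosed_iInter fun A => isClosed_iInter fun _ => isClosed_eq (by fun_prop) (by fun_prop)
  have hΛv : Convex ℝ Λ := by
    refine (convex_stdSimplex ℝ (Finset S)).inter ?_
    intro a ha b hb s t hs ht hst A hA
    simp [ha A hA, hb A hA]
  have hLc : Continuous L := L.continuous_of_finiteDimensional
  let D : Set (S → ℝ) := {v | (∀ x, 0 ≤ v x) ∧ ∀ x y, 0 < μ x → v x ≤ v y}
  have hDc : IsClosed D := by
    have : D = (⋂ x, {v | 0 ≤ v x}) ∩ ⋂ x, ⋂ y, ⋂ (_ : 0 < μ x), {v | v x ≤ v y} := by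
      ext v; simp [D]
    rw [this]
    refine IsClosed.inter (isClosed_iInter fun x => ?_) (isClosed_iInter fun x =>
      isClosed_iInter fun y => isClosed_iInter fun _ => ?_)
    · exact isClosed_le (by fun_prop) (by fun_prop)
    · exact isClosed_le (by fun_prop) (by fun_prop)
  have hDv : Convex ℝ D := by
    rintro a ⟨ha, ha'⟩ b ⟨hb, hb'⟩ s t hs ht hst
    refine ⟨fun x => ?_, fun x y hxy => ?_⟩
    · have := ha x; have := hb x
      simp only [Pi.add_apply, Pi.smul_apply, smul_eq_mul]; positivity
    · simp only [Pi.add_apply, Pi.smul_apply, smul_eq_mul]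
      have := mul_le_mul_of_nonneg_left (ha' x y hxy) hs
      have := mul_le_mul_of_nonneg_left (hb' x y hxy) ht
      linarith
  by_cases hdis : Disjoint (L '' Λ) D
  · exfalso
    obtain ⟨f, u, v, h1, h2, h3⟩ := geometric_hahn_banach_compact_closed
      (hΛv.linear_image L) (hΛc.image hLc) hDv hDc hdis
    have hv : v < 0 := by
      have := h3 0 ⟨fun x => le_rfl, fun x y _ => le_rfl⟩
      simpa using this
    have hfD : ∀ d ∈ D, 0 ≤ f d := by
      rintro d ⟨hd, hd'⟩
      by_contra hneg
      push Not at hneg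
      have hk : 0 ≤ v / f d := (div_pos_of_neg_of_neg hv hneg).le
      have := h3 ((v / f d) • d) ⟨fun x => by simpa using mul_nonneg hk (hd x), fun x y hxy => by
        simpa using mul_le_mul_of_nonneg_left (hd' x y hxy) hk⟩
      rw [map_smul, smul_eq_mul, div_mul_cancel₀ _ hneg.ne] at this
      exact lt_irrefl _ this
    let ν : S → ℝ := fun x => f (Pi.single x 1)
    have hfν : ∀ a : S → ℝ, f a = ∑ x, a x * ν x := by
      intro a
      have : a = ∑ x, a x • (Pi.single x 1 : S → ℝ) := by
        ext y; simp [Finset.sum_apply, Pi.single_apply]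
      conv_lhs => rw [this]
      simp [map_sum, ν]
    have hνT : ∀ A ∈ T, ∑ x ∈ A, ν x < u := by
      intro A hA
      have : L (Pi.single A 1) ∈ L '' Λ := by
        refine ⟨_, ⟨single_mem_stdSimplex ℝ A, ?_⟩, rfl⟩
        intro B hB
        have : B ≠ A := by rintro rfl; exact hB hA
        simp [this]
      have := h1 _ this
      rw [hfν] at this
      have e : ∀ x, L (Pi.single A 1) x = if x ∈ A then 1 else 0 := by
        intro x
        change ∑ B, (Pi.single A 1 : Finset S → ℝ) B * (if x ∈ B then 1 else 0) = _
        rw [Finset.sum_eq_single A]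
        · simp
        · intro B _ hB; simp [hB]
        · simp
      simp_rw [e] at this
      simpa [Finset.sum_ite_mem] using this
    have hν1 : 0 ≤ ∑ x, ν x := by
      have := hfD (fun _ => 1) ⟨fun x => zero_le_one, fun x y _ => le_rfl⟩
      rw [hfν] at this
      simpa using this
    have hν0 : ∀ x, μ x = 0 → 0 ≤ ν x := by
      intro x hx
      refine hfD _ ⟨fun y => ?_, fun y z hy => ?_⟩
      · by_cases h : y = x <;> simp [Pi.single_apply, h]
      · have : y ≠ x := by rintro rfl; exact hy.ne' hx
        by_cases h : z = x <;> simp [Pi.single_apply, h, this]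
    let η : ℝ := -u / (Fintype.card S + 1)
    have hη : 0 < η := div_pos (by linarith) (by positivity)
    have hηc : ∀ A : Finset S, ∑ x ∈ A, (ν x + η) ≤ ∑ x ∈ A, ν x - u := by
      intro A
      rw [Finset.sum_add_distrib, Finset.sum_const, nsmul_eq_mul]
      have h4 : (A.card : ℝ) ≤ Fintype.card S + 1 := by
        have : A.card ≤ Fintype.card S := Finset.card_le_univ A
        have : (A.card : ℝ) ≤ Fintype.card S := by exact_mod_cast this
        linarith
      have h5 : (A.card : ℝ) * η ≤ (Fintype.card S + 1) * η := mul_le_mul_of_nonneg_right h4 hη.le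
      have h6 : ((Fintype.card S : ℝ) + 1) * η = -u := by
        simp only [η]; field_simp
      linarith
    have ev1 : ∀ᶠ ε in 𝓝[>] (0:ℝ), ∀ x, 0 ≤ μ x + ε * (ν x + η) := by
      rw [eventually_all]
      intro x
      rcases (hμ0 x).eq_or_lt with h | h
      · filter_upwards [self_mem_nhdsWithin] with ε hε
        have := hν0 x h.symm
        rw [← h]
        have : (0:ℝ) < ε := hε
        positivity
      · have : Tendsto (fun ε : ℝ => μ x + ε * (ν x + η)) (𝓝[>] 0) (𝓝 (μ x + 0 * (ν x + η))) :=
          Tendsto.mono_left (Continuous.tendsto (by fun_prop) 0) nhdsWithin_le_nhds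
        rw [zero_mul, add_zero] at this
        filter_upwards [this.eventually (lt_mem_nhds h)] with ε hε using hε.le
    have ev2 : ∀ᶠ ε in 𝓝[>] (0:ℝ), ∀ A : Finset S, ∑ x ∈ A, (μ x + ε * (ν x + η)) ≤ φ A := by
      rw [eventually_all]
      intro A
      have e : ∀ ε : ℝ, ∑ x ∈ A, (μ x + ε * (ν x + η)) = ∑ x ∈ A, μ x + ε * ∑ x ∈ A, (ν x + η) := by
        intro ε; rw [Finset.sum_add_distrib, Finset.mul_sum]
      simp_rw [e]
      by_cases hA : A ∈ T
      · filter_upwards [self_mem_nhdsWithin] with ε hε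
        have h7 : ∑ x ∈ A, (ν x + η) ≤ 0 := by
          have := hηc A; have := hνT A hA; linarith
        have hε : (0:ℝ) < ε := hε
        have := mul_nonpos_of_nonneg_of_nonpos hε.le h7
        have := hμ1 A
        linarith
      · rcases A.eq_empty_or_nonempty with h | h
        · simp [h, h0]
        · have hlt : ∑ x ∈ A, μ x < φ A := lt_of_le_of_ne (hμ1 A) (fun he => hA ⟨h, he⟩)
          have : Tendsto (fun ε : ℝ => ∑ x ∈ A, μ x + ε * ∑ x ∈ A, (ν x + η)) (𝓝[>] 0)
              (𝓝 (∑ x ∈ A, μ x + 0 * ∑ x ∈ A, (ν x + η))) :=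
            Tendsto.mono_left (Continuous.tendsto (by fun_prop) 0) nhdsWithin_le_nhds
          rw [zero_mul, add_zero] at this
          filter_upwards [this.eventually_lt_const hlt] with ε hε using hε.le
    obtain ⟨ε, ⟨hε1, hε2⟩, hε3⟩ := ((ev1.and ev2).and self_mem_nhdsWithin).exists
    have hε3 : (0:ℝ) < ε := hε3
    have := hmax (a := fun x => μ x + ε * (ν x + η)) ⟨hε1, hε2⟩
    simp only [mem_ofPred_eq] at this
    rw [Finset.sum_add_distrib, ← Finset.mul_sum, Finset.sum_add_distrib, Finset.sum_const,
      nsmul_eq_mul] at this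
    have h8 : 0 < ((Finset.univ : Finset S).card : ℝ) * η := by
      have : 0 < (Finset.univ : Finset S).card := Finset.card_pos.mpr Finset.univ_nonempty
      exact mul_pos (by exact_mod_cast this) hη
    have : 0 < ε * (∑ x, ν x + ((Finset.univ : Finset S).card : ℝ) * η) :=
      mul_pos hε3 (by linarith)
    linarith
  · rw [Set.not_disjoint_iff] at hdis
    obtain ⟨v, ⟨l, ⟨⟨hl0, hl1⟩, hlT⟩, rfl⟩, hv0, hv1⟩ := hdis
    have hex : ∃ A, 0 < l A := by
      by_contra hcon
      push Not at hcon
      have : ∑ A, l A ≤ 0 := Finset.sum_nonpos fun A _ => hcon A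
      linarith
    obtain ⟨A, hA⟩ := hex
    have hAT : A ∈ T := by
      by_contra h
      exact hA.ne' (hlT A h)
    obtain ⟨hAn, hAe⟩ := hAT
    obtain ⟨x, hxA, hx⟩ : ∃ x ∈ A, 0 < μ x := by
      by_contra hcon
      push Not at hcon
      have : ∑ x ∈ A, μ x ≤ 0 := Finset.sum_nonpos hcon
      have := hpos A hAn
      linarith
    refine ⟨μ, l, L l x, hμ0, hμ1, hl0, hl1, ?_, ?_, fun y => hv1 x y hx, fun y hy => ?_⟩
    · refine lt_of_lt_of_le hA ?_
      have : l A * (if x ∈ A then 1 else 0) ≤ ∑ A, l A * (if x ∈ A then 1 else 0) :=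
        Finset.single_le_sum (f := fun A => l A * (if x ∈ A then (1:ℝ) else 0))
          (fun B _ => mul_nonneg (hl0 B) (by split_ifs <;> simp)) (Finset.mem_univ A)
      rw [if_pos hxA, mul_one] at this
      exact this
    · intro B hB
      by_contra h
      exact hB (hlT B fun hT => h hT.2)
    · exact le_antisymm (hv1 y x hy) (hv1 x y hx)


theorem rcb_pos {S : Type*} [Fintype S] [DecidableEq S] (φ : Finset S → ℝ) (Q : ℝ) (hQ : 1 < Q)
    (h0 : 0 ≤ φ ∅) (hpos : ∀ A : Finset S, A.Nonempty → 0 < φ A)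
    (hsub : ∀ A B : Finset S, Disjoint A B → φ (A ∪ B) ≤ φ A + φ B)
    (hlow : ∀ A B : Finset S, Disjoint A B → φ A ^ Q + φ B ^ Q ≤ φ (A ∪ B) ^ Q)
    (hS : Nonempty S) :
    ∃ μ : S → ℝ, (∀ x, 0 ≤ μ x) ∧ (∀ A, ∑ x ∈ A, μ x ≤ φ A) ∧
      φ Finset.univ ≤ Q ^ 2 * ∑ x, μ x := by
  classical
  obtain ⟨μ, l, κ, hμ0, hμ1, hl0, hl1, hκ, hlt, hv1, hv2⟩ := rcb_sep φ h0 hpos hS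
  refine ⟨μ, hμ0, hμ1, ?_⟩
  have hφ0 : ∀ A, 0 ≤ φ A := fun A => by
    rcases A.eq_empty_or_nonempty with h | h
    · rw [h]; exact h0
    · exact (hpos A h).le
  set m : Finset S → ℝ := fun A => ∑ x ∈ A, μ x with hm
  have hm0 : ∀ A, 0 ≤ m A := fun A => Finset.sum_nonneg fun x _ => hμ0 x
  set M := ∑ x, μ x with hM
  have hM0 : 0 ≤ M := hm0 Finset.univ
  set t := 1 / Q with ht
  have hQ0 : 0 < Q := by linarith
  have ht0 : 0 < t := by positivity
  have ht1 : t < 1 := by rw [ht, div_lt_one hQ0]; exact hQ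
  have hQt : Q * t = 1 := by rw [ht]; field_simp
  have hκ1 : κ ≤ 1 := by
    obtain ⟨x⟩ := hS
    refine (hv1 x).trans ?_
    refine le_trans ?_ hl1.le
    refine Finset.sum_le_sum fun A _ => ?_
    have := hl0 A
    split_ifs <;> simp [this]
  have hsplit : ∀ A U : Finset S, m (A ∩ U) + m (A \ U) = m A := fun A U =>
    Finset.sum_inter_add_sum_sdiff A U _
  have key1 : ∀ A U : Finset S, l A ≠ 0 → φ (A ∩ U) ≤ Q ^ t * (m A ^ (1 - t) * m (A ∩ U) ^ t) := by
    intro A U hA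
    have hAe : m A = φ A := hlt A hA
    have hle := hlow (A ∩ U) (A \ U) (Finset.disjoint_left.mpr fun x hx hx' => by
      simp only [Finset.mem_inter, Finset.mem_sdiff] at hx hx'; exact hx'.2 hx.2)
    rw [show (A ∩ U) ∪ (A \ U) = A by ext x; simp; tauto, ← hAe] at hle
    have h2 : m (A \ U) ^ Q ≤ φ (A \ U) ^ Q := Real.rpow_le_rpow (hm0 _) (hμ1 _) hQ0.le
    have h3 : m (A \ U) = m A - m (A ∩ U) := by linarith [hsplit A U]
    have h4 : m (A ∩ U) ≤ m A := by linarith [hsplit A U, hm0 (A \ U)]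
    have h5 : φ (A ∩ U) ^ Q ≤ Q * (m A ^ (Q - 1) * m (A ∩ U)) := by
      rcases (hm0 A).eq_or_lt with hz | hz
      · have : φ (A ∩ U) ^ Q ≤ 0 := by
          rw [← hz, Real.zero_rpow hQ0.ne'] at hle
          have := Real.rpow_nonneg (hφ0 (A \ U)) Q
          linarith
        refine this.trans ?_
        have := Real.rpow_nonneg (hm0 A) (Q - 1)
        have := hm0 (A ∩ U)
        positivity
      · have hb := one_add_mul_self_le_rpow_one_add (s := -(m (A ∩ U) / m A))
          (by rw [neg_le_neg_iff, div_le_one hz]; exact h4) hQ.le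
        have e1 : m A * (1 + -(m (A ∩ U) / m A)) = m (A \ U) := by
          rw [h3]; field_simp; ring
        have e2 : m A ^ Q = m A ^ (Q - 1) * m A := by
          rw [← Real.rpow_add_one hz.ne']; congr 1; ring
        have h6 : m A ^ Q * (1 + Q * -(m (A ∩ U) / m A)) ≤ m (A \ U) ^ Q := by
          rw [← e1, Real.mul_rpow hz.le]
          · exact mul_le_mul_of_nonneg_left hb (Real.rpow_nonneg hz.le _)
          · have : m (A ∩ U) / m A ≤ 1 := by rw [div_le_one hz]; exact h4
            linarith
        have e3 : m A ^ Q * (1 + Q * -(m (A ∩ U) / m A)) =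
            m A ^ Q - Q * (m A ^ (Q - 1) * m (A ∩ U)) := by
          rw [e2]; field_simp; ring
        linarith
    have h6 := Real.rpow_le_rpow (Real.rpow_nonneg (hφ0 _) _) h5 ht0.le
    rw [← Real.rpow_mul (hφ0 _), hQt, Real.rpow_one, Real.mul_rpow hQ0.le (mul_nonneg
      (Real.rpow_nonneg (hm0 _) _) (hm0 _)), Real.mul_rpow (Real.rpow_nonneg (hm0 _) _) (hm0 _),
      ← Real.rpow_mul (hm0 _), show (Q - 1) * t = 1 - t by rw [sub_mul, hQt, one_mul]] at h6
    exact h6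
  have key2 : ∀ U : Finset S, ∑ A, l A * m (A ∩ U) = κ * m U := by
    intro U
    have : ∀ A, m (A ∩ U) = ∑ x ∈ U, (if x ∈ A then 1 else 0) * μ x := by
      intro A
      simp only [hm, ite_mul, one_mul, zero_mul]
      rw [Finset.sum_ite_mem, Finset.inter_comm]
    simp_rw [this, Finset.mul_sum]
    rw [Finset.sum_comm, hm, Finset.mul_sum]
    refine Finset.sum_congr rfl fun x _ => ?_
    rcases (hμ0 x).eq_or_lt with h | h
    · simp [← h]
    · simp_rw [← mul_assoc]
      rw [← Finset.sum_mul, hv2 x h]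
  have key2' : ∑ A, l A * m A = κ * M := by
    have := key2 Finset.univ
    simpa using this
  have key3 : ∀ U : Finset S, ∑ A, l A * m (U \ A) = (1 - κ) * m U := by
    intro U
    have : ∀ A, m (U \ A) = m U - m (A ∩ U) := by
      intro A; rw [Finset.inter_comm]; linarith [hsplit U A]
    simp_rw [this, mul_sub]
    rw [Finset.sum_sub_distrib, key2, ← Finset.sum_mul, hl1]; ring
  set K := Q * Q ^ t with hK
  have hQtp : 0 < Q ^ t := Real.rpow_pos_of_pos hQ0 _
  have hK0 : 0 < K := by positivity
  let H : Finset S → ℝ := fun U => K * (M ^ (1 - t) * m U ^ t)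
  have hrho : ∀ U, ∑ A, l A * φ (A ∩ U) ≤ Q ^ t * κ * (M ^ (1 - t) * m U ^ t) := by
    intro U
    calc ∑ A, l A * φ (A ∩ U) ≤ ∑ A, Q ^ t * (l A * (m A ^ (1 - t) * m (A ∩ U) ^ t)) := by
          refine Finset.sum_le_sum fun A _ => ?_
          by_cases h : l A = 0
          · simp [h]
          · have := mul_le_mul_of_nonneg_left (key1 A U h) (hl0 A)
            linarith
      _ = Q ^ t * ∑ A, l A * (m A ^ (1 - t) * m (A ∩ U) ^ t) := by rw [Finset.mul_sum]
      _ ≤ Q ^ t * ((κ * M) ^ (1 - t) * (κ * m U) ^ t) := by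
          refine mul_le_mul_of_nonneg_left ?_ hQtp.le
          rw [← key2', ← key2 U]
          exact rcb_holder _ _ _ _ t ht0 ht1 (fun A _ => hl0 A) (fun A _ => hm0 A) (fun A _ => hm0 _)
      _ = _ := by
          rw [Real.mul_rpow hκ.le hM0, Real.mul_rpow hκ.le (hm0 U)]
          have : κ ^ (1 - t) * κ ^ t = κ := by rw [← Real.rpow_add hκ]; simp
          calc _ = Q ^ t * (κ ^ (1 - t) * κ ^ t) * (M ^ (1 - t) * m U ^ t) := by ring
            _ = _ := by rw [this]
  have hPH : ∀ U, ∑ A, l A * H (U \ A) ≤ (1 - κ * t) * H U := by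
    intro U
    have h1 := rcb_holder Finset.univ l (fun _ => 1) (fun A => m (U \ A)) t ht0 ht1
      (fun A _ => hl0 A) (fun A _ => zero_le_one) (fun A _ => hm0 _)
    simp only [Real.one_rpow, one_mul, mul_one, hl1] at h1
    rw [key3, Real.mul_rpow (by linarith) (hm0 _)] at h1
    have h2 : (1 - κ) ^ t ≤ 1 - κ * t := by
      have := rpow_one_add_le_one_add_mul_self (s := -κ) (by linarith) ht0.le ht1.le
      calc (1 - κ) ^ t = (1 + -κ) ^ t := by ring_nf
        _ ≤ _ := this
        _ = _ := by ring
    have h3 := mul_le_mul_of_nonneg_right h2 (Real.rpow_nonneg (hm0 U) t)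
    have h4 : ∑ A, l A * H (U \ A) = K * M ^ (1 - t) * ∑ A, l A * m (U \ A) ^ t := by
      rw [Finset.mul_sum]
      refine Finset.sum_congr rfl fun A _ => ?_
      simp only [H]; ring
    rw [h4]
    calc _ ≤ K * M ^ (1 - t) * ((1 - κ * t) * m U ^ t) :=
          mul_le_mul_of_nonneg_left (h1.trans h3)
            (mul_nonneg hK0.le (Real.rpow_nonneg hM0 _))
      _ = _ := by simp only [H]; ring
  have hH0 : ∀ U, 0 ≤ H U := fun U => mul_nonneg hK0.le (mul_nonneg (Real.rpow_nonneg hM0 _)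
    (Real.rpow_nonneg (hm0 _) _))
  have hφe : φ ∅ ≤ 0 := by
    have := hlow ∅ ∅ (by simp)
    rw [Finset.empty_union] at this
    by_contra hc
    push Not at hc
    have := Real.rpow_pos_of_pos hc Q
    linarith
  have hstep : ∀ U, φ U ≤ ∑ A, l A * φ (A ∩ U) + ∑ A, l A * φ (U \ A) := by
    intro U
    rw [← Finset.sum_add_distrib]
    calc φ U = ∑ A, l A * φ U := by rw [← Finset.sum_mul, hl1, one_mul]
      _ ≤ _ := by
        refine Finset.sum_le_sum fun A _ => ?_
        rw [← mul_add]
        refine mul_le_mul_of_nonneg_left ?_ (hl0 A)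
        have := hsub (A ∩ U) (U \ A) (Finset.disjoint_left.mpr fun x hx hx' => by
          simp only [Finset.mem_inter, Finset.mem_sdiff] at hx hx'; exact hx'.2 hx.1)
        rwa [show (A ∩ U) ∪ (U \ A) = U by ext x; simp; tauto] at this
  have main : ∀ U, φ U ≤ H U := by
    intro U
    induction U using Finset.strongInduction with
    | H U ih =>
      rcases U.eq_empty_or_nonempty with he | hne
      · rw [he]; exact hφe.trans (hH0 ∅)
      by_contra hcon
      push Not at hcon
      obtain ⟨x, hx⟩ := hne
      have h1 := hstep U
      have h2 := hrho U
      have h3 := hPH U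
      have h4 : Q ^ t * κ * (M ^ (1 - t) * m U ^ t) = κ * t * H U := by
        simp only [H, hK]
        calc _ = (Q * t) * (Q ^ t * κ * (M ^ (1 - t) * m U ^ t)) := by rw [hQt, one_mul]
          _ = _ := by ring
      have h5 : φ U - H U ≤ ∑ A, l A * (φ (U \ A) - H (U \ A)) := by
        simp_rw [mul_sub]
        rw [Finset.sum_sub_distrib]
        linarith
      have h6 : ∑ A, l A * (φ (U \ A) - H (U \ A)) ≤
          ∑ A, (l A - l A * (if x ∈ A then 1 else 0)) * (φ U - H U) := by
        refine Finset.sum_le_sum fun A _ => ?_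
        by_cases hxA : x ∈ A
        · rw [if_pos hxA]
          have := ih (U \ A) (by
            rw [Finset.ssubset_iff_of_subset Finset.sdiff_subset]
            exact ⟨x, hx, by simp [hxA]⟩)
          have := mul_nonpos_of_nonneg_of_nonpos (hl0 A) (sub_nonpos.mpr this)
          simpa using this
        · rw [if_neg hxA, mul_zero, sub_zero]
          refine mul_le_mul_of_nonneg_left ?_ (hl0 A)
          by_cases hd : U \ A = U
          · rw [hd]
          · have := ih (U \ A) (Finset.ssubset_iff_subset_ne.mpr ⟨Finset.sdiff_subset, hd⟩)
            linarith
      rw [← Finset.sum_mul, Finset.sum_sub_distrib, hl1] at h6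
      have h7 := mul_le_mul_of_nonneg_right (hv1 x) (sub_nonneg.mpr hcon.le)
      have h8 := mul_pos hκ (sub_pos.mpr hcon)
      linarith
  refine (main Finset.univ).trans ?_
  have hmu : m Finset.univ = M := rfl
  simp only [H, hmu]
  rcases hM0.eq_or_lt with h | h
  · rw [← h, Real.zero_rpow (by linarith)]; simp
  · rw [← Real.rpow_add h, sub_add_cancel, Real.rpow_one]
    refine mul_le_mul_of_nonneg_right ?_ hM0
    rw [hK, sq]
    refine mul_le_mul_of_nonneg_left ?_ hQ0.le
    calc Q ^ t ≤ Q ^ (1:ℝ) := Real.rpow_le_rpow_of_exponent_le hQ.le ht1.le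
      _ = Q := Real.rpow_one Q

theorem rcb_measure {S : Type*} [Fintype S] [DecidableEq S] (φ : Finset S → ℝ) (Q : ℝ) (hQ : 1 < Q)
    (h0 : φ ∅ = 0) (hmono : ∀ A B : Finset S, A ⊆ B → φ A ≤ φ B)
    (hsub : ∀ A B : Finset S, Disjoint A B → φ (A ∪ B) ≤ φ A + φ B)
    (hlow : ∀ A B : Finset S, Disjoint A B → φ A ^ Q + φ B ^ Q ≤ φ (A ∪ B) ^ Q) :
    ∃ μ : S → ℝ, (∀ x, 0 ≤ μ x) ∧ (∀ A, ∑ x ∈ A, μ x ≤ φ A) ∧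
      φ Finset.univ ≤ Q ^ 2 * ∑ x, μ x := by
  classical
  have hφ0 : ∀ A, 0 ≤ φ A := fun A => h0 ▸ hmono ∅ A (Finset.empty_subset A)
  have hnull : ∀ A : Finset S, (∀ x ∈ A, φ {x} ≤ 0) → φ A ≤ 0 := by
    intro A
    induction A using Finset.induction_on with
    | empty => intro _; exact h0.le
    | insert a s ha ih =>
      intro h
      have := hsub {a} s (by simpa using ha)
      rw [← Finset.insert_eq] at this
      have h1 := h a (by simp)
      have h2 := ih fun x hx => h x (by simp [hx])
      linarith
  let S' := {x : S // 0 < φ {x}}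
  let e : S' ↪ S := Function.Embedding.subtype _
  have huniv : φ Finset.univ ≤ φ ((Finset.univ : Finset S').map e) := by
    have h1 := hsub ((Finset.univ : Finset S').map e) ((Finset.univ : Finset S').map e)ᶜ
      disjoint_compl_right
    rw [Finset.union_compl] at h1
    have h2 := hnull ((Finset.univ : Finset S').map e)ᶜ (by
      intro x hx
      by_contra hc
      push Not at hc
      rw [Finset.mem_compl] at hx
      exact hx (Finset.mem_map.mpr ⟨⟨x, hc⟩, Finset.mem_univ _, rfl⟩))
    linarith
  rcases isEmpty_or_nonempty S' with hE | hN
  · refine ⟨0, fun _ => le_rfl, fun A => by simpa using hφ0 A, ?_⟩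
    simp only [Finset.univ_eq_empty, Finset.map_empty, h0] at huniv
    simpa using huniv
  · obtain ⟨μ, hμ0, hμ1, hμ2⟩ := rcb_pos (fun A : Finset S' => φ (A.map e)) Q hQ (hφ0 _)
      (by
        rintro A ⟨x, hx⟩
        refine lt_of_lt_of_le x.2 (hmono _ _ ?_)
        rw [Finset.singleton_subset_iff]
        exact Finset.mem_map.mpr ⟨x, hx, rfl⟩)
      (by
        intro A B hAB
        rw [Finset.map_union]
        exact hsub _ _ ((Finset.disjoint_map e).mpr hAB))
      (by
        intro A B hAB
        rw [Finset.map_union]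
        exact hlow _ _ ((Finset.disjoint_map e).mpr hAB)) hN
    let μ' : S → ℝ := fun x => if h : 0 < φ {x} then μ ⟨x, h⟩ else 0
    have hsum : ∀ A : Finset S, ∑ x ∈ A, μ' x = ∑ x ∈ A.subtype (fun x => 0 < φ {x}), μ x := by
      intro A
      have h1 : ∀ x : S', μ x = μ' x := by
        intro x
        simp only [μ']
        rw [dif_pos x.2]
      simp_rw [h1]
      rw [Finset.sum_subtype_eq_sum_filter, Finset.sum_filter]
      refine Finset.sum_congr rfl fun x _ => ?_
      split_ifs with h
      · rfl
      · simp [μ', h]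
    refine ⟨μ', fun x => ?_, fun A => ?_, ?_⟩
    · simp only [μ']; split_ifs
      · exact hμ0 _
      · exact le_rfl
    · rw [hsum]
      refine (hμ1 _).trans (hmono _ _ ?_)
      intro x hx
      obtain ⟨y, hy, rfl⟩ := Finset.mem_map.mp hx
      exact Finset.mem_subtype.mp hy
    · rw [hsum]
      refine huniv.trans (hμ2.trans (le_of_eq ?_))
      congr 1
      refine Finset.sum_congr ?_ fun _ _ => rfl
      ext x; simp


theorem rcb_scalar (R : ℝ) (hR0 : 0 < R) (hR1 : R < 1) :
    ∃ C x0 : ℝ, 1 ≤ C ∧ 0 < x0 ∧ (∀ x, 0 ≤ x → x < x0 → x ^ R ≤ 1 - R) ∧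
      ∀ θ : ℝ, 0 < θ → θ < 1 → ∃ w : ℕ → ℝ, (∀ k, 0 ≤ w k) ∧
        (∀ (k : ℕ) (x : ℝ), x0 * Real.exp (k * θ) ≤ x → x < x0 * Real.exp ((k + 1) * θ) →
          x ^ R ≤ (1 - R) + R * (Real.exp θ * (w k * (x0 * Real.exp (k * θ))))) ∧
        ∀ m : ℕ, ∑ k ∈ Finset.range m, w k ^ ((1 + θ) / θ) ≤ C / θ := by
  have h1R : 0 < 1 - R := by linarith
  set x0 := (1 - R) ^ (1 / R) with hx0
  set x1 := (1 / R) ^ (1 / (1 - R)) with hx1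
  have hx0p : 0 < x0 := Real.rpow_pos_of_pos h1R _
  have hx1p : 0 < x1 := Real.rpow_pos_of_pos (by positivity) _
  have hx01 : x0 ≤ 1 := Real.rpow_le_one h1R.le (by linarith) (by positivity)
  have hx11 : 1 ≤ x1 := Real.one_le_rpow (by rw [le_div_iff₀ hR0]; linarith) (by positivity)
  set L := Real.log (x1 / x0) with hL
  have hL0 : 0 ≤ L := Real.log_nonneg (by rw [le_div_iff₀ hx0p]; linarith)
  set ρ := Real.exp (-(1 - R)) with hρ
  have hρ0 : 0 < ρ := Real.exp_pos _
  have hρ1 : ρ < 1 := by rw [hρ, Real.exp_lt_one_iff]; linarith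
  have hg : 0 ≤ 1 / (1 - ρ) := by
    have : 0 < 1 - ρ := by linarith
    positivity
  refine ⟨L + 1 + 1 / (1 - ρ), x0, by linarith, hx0p, ?_, ?_⟩
  · intro x hx hlt
    calc x ^ R ≤ x0 ^ R := Real.rpow_le_rpow hx hlt.le hR0.le
      _ = 1 - R := by rw [hx0, one_div, Real.rpow_inv_rpow h1R.le hR0.ne']
  intro θ hθ0 hθ1
  have hw0 : ∀ k : ℕ, 0 ≤ min 1 (Real.exp (-(1 - R) * (k * θ - L))) := fun k =>
    le_min zero_le_one (Real.exp_pos _).le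
  refine ⟨fun k => min 1 (Real.exp (-(1 - R) * (k * θ - L))), hw0, ?_, ?_⟩
  · intro k x hx1' hx2
    set y := x0 * Real.exp (k * θ) with hy
    have hyp : 0 < y := by positivity
    have hxy : x ≤ Real.exp θ * y := by
      refine hx2.le.trans (le_of_eq ?_)
      rw [hy, add_mul, one_mul, Real.exp_add]; ring
    have hxp : 0 < x := lt_of_lt_of_le hyp hx1'
    rcases min_choice 1 (Real.exp (-(1 - R) * (k * θ - L))) with h | h
    · simp only [h, one_mul]
      have := rpow_one_add_le_one_add_mul_self (s := x - 1) (by linarith) hR0.le hR1.le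
      rw [add_sub_cancel] at this
      have := mul_le_mul_of_nonneg_left hxy hR0.le
      linarith
    · simp only [h]
      have e1 : Real.exp (-(1 - R) * (k * θ - L)) = y ^ (R - 1) / R := by
        have : (k * θ - L) = Real.log (y / x1) := by
          rw [Real.log_div hyp.ne' hx1p.ne', hL, Real.log_div hx1p.ne' hx0p.ne', hy,
            Real.log_mul hx0p.ne' (Real.exp_pos _).ne', Real.log_exp]; ring
        rw [this, mul_comm, ← Real.rpow_def_of_pos (by positivity), Real.div_rpow hyp.le hx1p.le,
          show -(1 - R) = R - 1 by ring]
        congr 1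
        rw [hx1, ← Real.rpow_mul (by positivity)]
        have : 1 / (1 - R) * (R - 1) = -1 := by field_simp; ring
        rw [this, Real.rpow_neg_one]; simp
      rw [e1]
      have e2 : R * (Real.exp θ * (y ^ (R - 1) / R * y)) = Real.exp θ * y ^ R := by
        have : y ^ R = y ^ (R - 1) * y := by
          rw [← Real.rpow_add_one hyp.ne']; congr 1; ring
        rw [this]; field_simp
      rw [e2]
      have h3 : x ^ R ≤ (Real.exp θ * y) ^ R := Real.rpow_le_rpow hxp.le hxy hR0.le
      rw [Real.mul_rpow (Real.exp_pos _).le hyp.le] at h3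
      have h4 : Real.exp θ ^ R ≤ Real.exp θ := by
        calc Real.exp θ ^ R ≤ Real.exp θ ^ (1:ℝ) :=
              Real.rpow_le_rpow_of_exponent_le (Real.one_le_exp hθ0.le) hR1.le
          _ = _ := Real.rpow_one _
      have h5 := mul_le_mul_of_nonneg_right h4 (Real.rpow_nonneg hyp.le R)
      linarith
  · intro m
    have hq : 0 < (1 + θ) / θ := by positivity
    set j := ⌈L / θ⌉₊ with hj
    have hjL : L / θ ≤ j := Nat.le_ceil _
    have hjU : (j : ℝ) < L / θ + 1 := Nat.ceil_lt_add_one (by positivity)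
    have hnn : ∀ k : ℕ, 0 ≤ min 1 (Real.exp (-(1 - R) * (k * θ - L))) ^ ((1 + θ) / θ) :=
      fun k => Real.rpow_nonneg (hw0 k) _
    calc ∑ k ∈ Finset.range m, min 1 (Real.exp (-(1 - R) * (k * θ - L))) ^ ((1 + θ) / θ)
        ≤ ∑ k ∈ Finset.range (j + m), min 1 (Real.exp (-(1 - R) * (k * θ - L))) ^ ((1 + θ) / θ) :=
          Finset.sum_le_sum_of_subset_of_nonneg
            (Finset.range_subset_range.mpr (by omega)) (fun k _ _ => hnn k)
      _ = ∑ k ∈ Finset.range j, min 1 (Real.exp (-(1 - R) * (k * θ - L))) ^ ((1 + θ) / θ) +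
          ∑ k ∈ Finset.range m,
            min 1 (Real.exp (-(1 - R) * ((j + k : ℕ) * θ - L))) ^ ((1 + θ) / θ) := by
          rw [Finset.sum_range_add]
      _ ≤ ∑ k ∈ Finset.range j, (1:ℝ) + ∑ k ∈ Finset.range m, ρ ^ k := by
          refine add_le_add (Finset.sum_le_sum fun k _ => ?_) (Finset.sum_le_sum fun k _ => ?_)
          · exact Real.rpow_le_one (hw0 k) (min_le_left _ _) hq.le
          · calc _ ≤ (Real.exp (-(1 - R) * ((j + k : ℕ) * θ - L))) ^ ((1 + θ) / θ) :=
                  Real.rpow_le_rpow (hw0 _) (min_le_right _ _) hq.le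
              _ = Real.exp ((-(1 - R) * ((j + k : ℕ) * θ - L)) * ((1 + θ) / θ)) := by
                  rw [Real.exp_mul _ ((1 + θ) / θ)]
              _ ≤ Real.exp (k * -(1 - R)) := by
                  rw [Real.exp_le_exp]
                  have e : (-(1 - R) * ((j + k : ℕ) * θ - L)) * ((1 + θ) / θ) =
                      -(1 - R) * (((j - L / θ) + k) * (1 + θ)) := by
                    push_cast; field_simp; ring
                  rw [e]
                  have h6 : (k : ℝ) ≤ ((j - L / θ) + k) * (1 + θ) := by
                    have : 0 ≤ (j : ℝ) - L / θ := by linarith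
                    have hk : (0:ℝ) ≤ k := by positivity
                    nlinarith [mul_nonneg (add_nonneg this hk) hθ0.le]
                  nlinarith
              _ = ρ ^ k := by rw [Real.exp_nat_mul]
      _ ≤ j + 1 / (1 - ρ) := by
          gcongr
          · simp
          · rw [one_div]
            have hs := (summable_geometric_of_lt_one hρ0.le hρ1)
            rw [← tsum_geometric_of_lt_one hρ0.le hρ1]
            exact hs.sum_le_tsum _ (fun k _ => by positivity)
      _ ≤ (L + 1 + 1 / (1 - ρ)) / θ := by
          have h7 : 1 ≤ 1 / θ := by rw [le_div_iff₀ hθ0]; linarith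
          have h8 : 1 / (1 - ρ) ≤ 1 / (1 - ρ) * (1 / θ) := le_mul_of_one_le_right hg h7
          have : (L + 1 + 1 / (1 - ρ)) / θ = L / θ + 1 / θ + 1 / (1 - ρ) * (1 / θ) := by ring
          rw [this]; linarith


theorem rcb_up {Ω : Type*} [TopologicalSpace Ω] [MeasurableSpace Ω] (X : AdmissibleQuasinorm Ω)
    (p : ℝ) (hp : 0 < p) (h : CrudeUpper X p 1) (u v : Ω → ℝ) (hu : Measurable u)
    (hv : Measurable v) (hd : ∀ x, u x = 0 ∨ v x = 0) (huf : X.N u < ⊤) (hvf : X.N v < ⊤) :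
    X.N (fun x => u x + v x) < ⊤ ∧
      (X.N (fun x => u x + v x)).toReal ^ p ≤ (X.N u).toReal ^ p + (X.N v).toReal ^ p := by
  have h1 := h 2 ![u, v] (by intro i; fin_cases i <;> simpa) (by
    intro i j hij x
    fin_cases i <;> fin_cases j <;> simp_all [or_comm])
  simp only [Fin.sum_univ_two, Matrix.cons_val_zero, Matrix.cons_val_one, ENNReal.ofReal_one,
    one_mul] at h1
  have hfin : X.N u ^ p + X.N v ^ p ≠ ⊤ := by
    simp [ENNReal.rpow_eq_top_iff, huf.ne, hvf.ne, hp.not_gt]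
  have h2 : X.N (fun x => u x + v x) ^ p ≤ X.N u ^ p + X.N v ^ p := by
    have := ENNReal.rpow_le_rpow h1 hp.le
    rwa [one_div, ENNReal.rpow_inv_rpow hp.ne'] at this
  constructor
  · exact lt_of_le_of_lt h1 (ENNReal.rpow_lt_top_of_nonneg (by positivity) hfin)
  · have := ENNReal.toReal_mono hfin h2
    rwa [ENNReal.toReal_add (ENNReal.rpow_ne_top_of_nonneg hp.le huf.ne)
      (ENNReal.rpow_ne_top_of_nonneg hp.le hvf.ne), ← ENNReal.toReal_rpow, ← ENNReal.toReal_rpow,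
      ← ENNReal.toReal_rpow] at this

theorem rcb_low {Ω : Type*} [TopologicalSpace Ω] [MeasurableSpace Ω] (X : AdmissibleQuasinorm Ω)
    (q : ℝ) (hq : 0 < q) (h : CrudeLower X q 1) (n : ℕ) (f : Fin n → Ω → ℝ)
    (hf : ∀ i, Measurable (f i)) (hd : DisjSupp f) (hfin : X.N (fun x => ∑ i, f i x) < ⊤) :
    ∑ i, (X.N (f i)).toReal ^ q ≤ (X.N (fun x => ∑ i, f i x)).toReal ^ q := by
  have h1 := h n f hf hd
  rw [ENNReal.ofReal_one, one_mul] at h1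
  have h2 := ENNReal.rpow_le_rpow h1 hq.le
  rw [one_div, ENNReal.rpow_inv_rpow hq.ne'] at h2
  have hfin' : X.N (fun x => ∑ i, f i x) ^ q ≠ ⊤ := ENNReal.rpow_ne_top_of_nonneg hq.le hfin.ne
  have h3 := ENNReal.toReal_mono hfin' h2
  rw [ENNReal.toReal_sum] at h3
  · simpa only [← ENNReal.toReal_rpow] using h3
  · intro i _ hi
    have : (∑ i, X.N (f i) ^ q) = ⊤ := ENNReal.sum_eq_top.mpr ⟨i, Finset.mem_univ _, hi⟩
    rw [this] at h2
    exact hfin' (top_le_iff.mp h2)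

theorem rcb_zero {Ω : Type*} [TopologicalSpace Ω] [MeasurableSpace Ω] (X : AdmissibleQuasinorm Ω) :
    X.N (fun _ => 0) = 0 := by
  have := X.smul 0 (fun _ => 0) measurable_const
  simpa using this

theorem rcb_max {Ω : Type*} [TopologicalSpace Ω] [MeasurableSpace Ω] (X : AdmissibleQuasinorm Ω)
    (p : ℝ) (hp : 0 < p) (h : CrudeUpper X p 1) (u v w : Ω → ℝ) (hu : Measurable u)
    (hv : Measurable v) (hw : Measurable w) (huf : X.N u < ⊤) (hvf : X.N v < ⊤) (c : ℝ)
    (hc : 0 ≤ c) (hle : ∀ x, |w x| ≤ c * max |u x| |v x|) : X.N w < ⊤ := by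
  classical
  have hs : MeasurableSet {x | |v x| ≤ |u x|} := measurableSet_le hv.abs hu.abs
  let w1 : Ω → ℝ := fun x => if |v x| ≤ |u x| then w x else 0
  let w2 : Ω → ℝ := fun x => if |v x| ≤ |u x| then 0 else w x
  have hw1 : Measurable w1 := Measurable.ite hs hw measurable_const
  have hw2 : Measurable w2 := Measurable.ite hs measurable_const hw
  have f1 : X.N w1 < ⊤ := by
    refine lt_of_le_of_lt (X.mono w1 (fun x => c * u x) hw1 (hu.const_mul c) ?_) ?_
    · intro x
      simp only [w1]
      split_ifs with hx
      · rw [abs_mul, abs_of_nonneg hc]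
        simpa [max_eq_left hx] using hle x
      · rw [abs_zero]; positivity
    · rw [X.smul c u hu]
      exact ENNReal.mul_lt_top ENNReal.ofReal_lt_top huf
  have f2 : X.N w2 < ⊤ := by
    refine lt_of_le_of_lt (X.mono w2 (fun x => c * v x) hw2 (hv.const_mul c) ?_) ?_
    · intro x
      simp only [w2]
      split_ifs with hx
      · rw [abs_zero]; positivity
      · rw [abs_mul, abs_of_nonneg hc]
        push Not at hx
        simpa [max_eq_right hx.le] using hle x
    · rw [X.smul c v hv]
      exact ENNReal.mul_lt_top ENNReal.ofReal_lt_top hvf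
  have := (rcb_up X p hp h w1 w2 hw1 hw2 (by
    intro x; simp only [w1, w2]; split_ifs <;> simp) f1 f2).1
  have e : (fun x => w1 x + w2 x) = w := by
    ext x; simp only [w1, w2]; split_ifs <;> simp
  rwa [e] at this

theorem rcb_fin {Ω : Type*} [TopologicalSpace Ω] [MeasurableSpace Ω] (X : AdmissibleQuasinorm Ω)
    (p r : ℝ) (hp : 0 < p) (hr : 0 < r) (h : CrudeUpper X p 1) {ι : Type*} (s : Finset ι)
    (f : ι → Ω → ℝ) (hf : ∀ i, Measurable (f i)) (hfin : ∀ i, X.N (f i) < ⊤) :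
    X.N (fun x => (∑ i ∈ s, |f i x| ^ r) ^ (1 / r)) < ⊤ := by
  classical
  have hm : ∀ s : Finset ι, Measurable (fun x => (∑ i ∈ s, |f i x| ^ r) ^ (1 / r)) := by
    intro s
    exact (Finset.measurable_sum s fun i _ => (hf i).abs.pow_const r).pow_const _
  induction s using Finset.induction_on with
  | empty =>
    have : (0:ℝ) ^ (1 / r) = 0 := Real.zero_rpow (by positivity)
    simp only [Finset.sum_empty, this, rcb_zero X]
    simp
  | insert a s ha ih =>
    refine rcb_max X p hp h _ (f a) _ (hm s) (hf a) (hm _) ih (hfin a) (2 ^ (1 / r)) (by positivity) ?_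
    intro x
    have hG : 0 ≤ ∑ i ∈ s, |f i x| ^ r := Finset.sum_nonneg fun i _ => by positivity
    rw [abs_of_nonneg (by positivity), abs_of_nonneg (by positivity), Finset.sum_insert ha]
    set G := ∑ i ∈ s, |f i x| ^ r
    set T := max (G ^ (1 / r)) |f a x| with hT
    have hT0 : 0 ≤ T := le_max_of_le_right (abs_nonneg _)
    have h1 : |f a x| ^ r ≤ T ^ r := Real.rpow_le_rpow (abs_nonneg _) (le_max_right _ _) hr.le
    have h2 : G ≤ T ^ r := by
      have := Real.rpow_le_rpow (by positivity) (le_max_left (G ^ (1 / r)) |f a x|) hr.le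
      rwa [one_div, Real.rpow_inv_rpow hG hr.ne', ← one_div] at this
    calc (|f a x| ^ r + G) ^ (1 / r) ≤ (2 * T ^ r) ^ (1 / r) :=
          Real.rpow_le_rpow (by positivity) (by linarith) (by positivity)
      _ = 2 ^ (1 / r) * T := by
          rw [Real.mul_rpow (by norm_num) (by positivity), one_div, Real.rpow_rpow_inv hT0 hr.ne']


theorem rcb_bound {Ω : Type*} [TopologicalSpace Ω] [MeasurableSpace Ω] (X : AdmissibleQuasinorm Ω)
    (r p R q θ C x0 : ℝ) (hr : 0 < r) (hp : 0 < p) (hRp : R = r / p) (hR0 : 0 < R) (hR1 : R < 1)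
    (hθ0 : 0 < θ) (hq : q = p * (1 + θ)) (hC : 1 ≤ C) (hx0 : 0 < x0)
    (hsc0 : ∀ x, 0 ≤ x → x < x0 → x ^ R ≤ 1 - R) (w : ℕ → ℝ) (hw0 : ∀ k, 0 ≤ w k)
    (hsc : ∀ (k : ℕ) (x : ℝ), x0 * Real.exp (k * θ) ≤ x → x < x0 * Real.exp ((k + 1) * θ) →
          x ^ R ≤ (1 - R) + R * (Real.exp θ * (w k * (x0 * Real.exp (k * θ)))))
    (hwsum : ∀ m : ℕ, ∑ k ∈ Finset.range m, w k ^ ((1 + θ) / θ) ≤ C / θ)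
    (hU : CrudeUpper X p 1) (hL : CrudeLower X q 1)
    (n : ℕ) (hn : 0 < n) (f : Fin n → Ω → ℝ) (hf : ∀ i, Measurable (f i))
    (hfin : ∀ i, X.N (f i) < ⊤) (b : Fin n → ℝ) (hb : ∀ i, 0 < b i)
    (hNb : ∀ i, (X.N (f i)).toReal ^ p ≤ b i) :
    (X.N (fun x => (∑ i, |f i x| ^ r) ^ (1 / r))).toReal ^ p ≤
      (1 + θ) ^ 2 * (Real.exp θ * (C / θ) ^ (θ / (1 + θ)) * (∑ i, b i ^ R) ^ (1 / R)) := by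
  classical
  have : Nonempty (Fin n) := ⟨⟨0, hn⟩⟩
  set F : Ω → ℝ := fun x => (∑ i, |f i x| ^ r) ^ (1 / r) with hF
  have hFm : Measurable F := (Finset.measurable_sum _ fun i _ => (hf i).abs.pow_const r).pow_const _
  have hFfin : X.N F < ⊤ := rcb_fin X p r hp hr hU Finset.univ f hf hfin
  have hF0 : ∀ x, 0 ≤ F x := fun x => by simp only [hF]; positivity
  have hFr : ∀ x, F x ^ r = ∑ i, |f i x| ^ r := fun x => by
    simp only [hF]
    rw [one_div, Real.rpow_inv_rpow (by positivity) hr.ne']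
  have hfF : ∀ i x, |f i x| ≤ F x := by
    intro i x
    have : |f i x| ^ r ≤ F x ^ r := by
      rw [hFr]
      exact Finset.single_le_sum (f := fun i => |f i x| ^ r) (fun j _ => by positivity)
        (Finset.mem_univ i)
    exact (Real.rpow_le_rpow_iff (abs_nonneg _) (hF0 x) hr).mp this
  set Q := 1 + θ with hQ
  have hq0 : 0 < q := by rw [hq]; positivity
  set Sgs := (∑ i, b i ^ R) ^ (1 / R) with hSg
  have hsumpos : 0 < ∑ i, b i ^ R :=
    Finset.sum_pos (fun i _ => Real.rpow_pos_of_pos (hb i) R) Finset.univ_nonempty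
  have hSg0 : 0 < Sgs := Real.rpow_pos_of_pos hsumpos _
  let β : Fin n → ℝ := fun i => b i / Sgs
  have hβ0 : ∀ i, 0 < β i := fun i => div_pos (hb i) hSg0
  have hβsum : ∑ i, β i ^ R = 1 := by
    have : ∀ i, β i ^ R = b i ^ R / (∑ i, b i ^ R) := by
      intro i
      simp only [β]
      rw [Real.div_rpow (hb i).le hSg0.le, hSg, one_div, Real.rpow_inv_rpow hsumpos.le hR0.ne']
    simp_rw [this]
    rw [← Finset.sum_div, div_self hsumpos.ne']
  let ξ : Fin n → Ω → ℝ := fun i x => (|f i x| / F x) ^ p / β i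
  have hξ0 : ∀ i x, 0 ≤ ξ i x := fun i x => by
    have := hF0 x; have := hβ0 i; simp only [ξ]; positivity
  have hξ1 : ∀ i x, ξ i x ≤ 1 / β i := by
    intro i x
    have h1 : |f i x| / F x ≤ 1 := div_le_one_of_le₀ (hfF i x) (hF0 x)
    have : (|f i x| / F x) ^ p ≤ 1 :=
      Real.rpow_le_one (div_nonneg (abs_nonneg _) (hF0 x)) h1 hp.le
    exact div_le_div_of_nonneg_right this (hβ0 i).le
  have hξm : ∀ i, Measurable (ξ i) := fun i => (((hf i).abs.div hFm).pow_const p).div_const _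
  let Kn : Ω → Fin n → ℕ := fun x i =>
    if ξ i x < x0 then 0 else ⌊Real.log (ξ i x / x0) / θ⌋₊ + 1
  have hKm : Measurable Kn := by
    refine measurable_pi_lambda _ fun i => ?_
    refine Measurable.ite (measurableSet_lt (hξm i) measurable_const) measurable_const ?_
    exact (Nat.measurable_floor.comp
      ((Real.measurable_log.comp ((hξm i).div_const _)).div_const _)).add_const 1
  obtain ⟨m, hm⟩ : ∃ m : ℕ, ∀ x i, Kn x i < m + 1 := by
    refine ⟨∑ i, (⌊Real.log (1 / β i / x0) / θ⌋₊ + 1), fun x i => ?_⟩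
    refine Nat.lt_succ_of_le ?_
    refine le_trans ?_ (Finset.single_le_sum (f := fun i => ⌊Real.log (1 / β i / x0) / θ⌋₊ + 1)
      (fun j _ => Nat.zero_le _) (Finset.mem_univ i))
    simp only [Kn]
    split_ifs with h
    · exact Nat.zero_le _
    · push Not at h
      have := hξ1 i x
      have : 0 < ξ i x := lt_of_lt_of_le hx0 h
      gcongr
  have hlev : ∀ x i k, Kn x i = k + 1 → x0 * Real.exp (k * θ) ≤ ξ i x ∧
      ξ i x < x0 * Real.exp ((k + 1) * θ) := by
    intro x i k hk
    simp only [Kn] at hk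
    split_ifs at hk with h
    push Not at h
    have hk' : ⌊Real.log (ξ i x / x0) / θ⌋₊ = k := by omega
    have hξp : 0 < ξ i x := lt_of_lt_of_le hx0 h
    have hlog : 0 ≤ Real.log (ξ i x / x0) := Real.log_nonneg (by rwa [le_div_iff₀ hx0, one_mul])
    rw [Nat.floor_eq_iff (by positivity), le_div_iff₀ hθ0, div_lt_iff₀ hθ0,
      Real.le_log_iff_exp_le (by positivity), Real.log_lt_iff_lt_exp (by positivity),
      le_div_iff₀ hx0, div_lt_iff₀ hx0] at hk'
    exact ⟨by linarith [hk'.1], by linarith [hk'.2]⟩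
  have hlev0 : ∀ x i, Kn x i = 0 → ξ i x < x0 := by
    intro x i hk
    simp only [Kn] at hk
    split_ifs at hk with h
    exact h
  let κ : Ω → (Fin n → Fin (m + 1)) := fun x i => ⟨Kn x i, hm x i⟩
  have hκm : ∀ A : Finset (Fin n → Fin (m + 1)), MeasurableSet {x | κ x ∈ A} := by
    intro A
    have : {x | κ x ∈ A} = Kn ⁻¹' {v | ∃ s ∈ A, ∀ i, v i = s i} := by
      ext x
      simp only [mem_ofPred_eq, mem_preimage]
      constructor
      · intro h; exact ⟨κ x, h, fun i => rfl⟩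
      · rintro ⟨s, hs, he⟩
        have : κ x = s := by ext i; exact he i
        rwa [this]
    rw [this]
    exact hKm (MeasurableSet.of_discrete)
  -- restriction
  let rs : (Ω → ℝ) → Finset (Fin n → Fin (m + 1)) → Ω → ℝ := fun g A x => if κ x ∈ A then g x else 0
  have hrsm : ∀ g A, Measurable g → Measurable (rs g A) := fun g A hg =>
    Measurable.ite (hκm A) hg measurable_const
  have hrsle : ∀ g A x, |rs g A x| ≤ |g x| := by
    intro g A x; simp only [rs]; split_ifs
    · exact le_rfl
    · simp
  have hrsfin : ∀ g A, Measurable g → X.N g < ⊤ → X.N (rs g A) < ⊤ := fun g A hg h =>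
    lt_of_le_of_lt (X.mono _ _ (hrsm g A hg) hg (hrsle g A)) h
  let φ : Finset (Fin n → Fin (m + 1)) → ℝ := fun A => (X.N (rs F A)).toReal ^ p
  have hrsadd : ∀ A B, Disjoint A B → (fun x => rs F A x + rs F B x) = rs F (A ∪ B) := by
    intro A B hAB
    ext x
    simp only [rs, Finset.mem_union]
    by_cases h1 : κ x ∈ A
    · have h2 : κ x ∉ B := Finset.disjoint_left.mp hAB h1
      simp [h1, h2]
    · simp [h1]
  have hrsd : ∀ A B, Disjoint A B → ∀ x, rs F A x = 0 ∨ rs F B x = 0 := by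
    intro A B hAB x
    simp only [rs]
    by_cases h1 : κ x ∈ A
    · have h2 : κ x ∉ B := Finset.disjoint_left.mp hAB h1
      simp [h2]
    · simp [h1]
  have hpow : ∀ t : ℝ, 0 ≤ t → (t ^ p) ^ Q = t ^ q := by
    intro t ht; rw [← Real.rpow_mul ht, hq]
  obtain ⟨μ, hμ0, hμ1, hμ2⟩ := rcb_measure φ Q (by linarith)
    (by
      have : rs F ∅ = fun _ => 0 := by ext x; simp [rs]
      simp only [φ, this, rcb_zero X]
      simp [Real.zero_rpow hp.ne'])
    (by
      intro A B hAB
      refine Real.rpow_le_rpow ENNReal.toReal_nonneg ?_ hp.le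
      refine ENNReal.toReal_mono (hrsfin F B hFm hFfin).ne
        (X.mono _ _ (hrsm F A hFm) (hrsm F B hFm) ?_)
      intro x
      simp only [rs]
      by_cases h1 : κ x ∈ A
      · simp [h1, hAB h1]
      · simp [h1])
    (by
      intro A B hAB
      have := (rcb_up X p hp hU (rs F A) (rs F B) (hrsm F A hFm) (hrsm F B hFm)
        (hrsd A B hAB) (hrsfin F A hFm hFfin) (hrsfin F B hFm hFfin)).2
      rwa [hrsadd A B hAB] at this)
    (by
      intro A B hAB
      have h1 := rcb_low X q hq0 hL 2 ![rs F A, rs F B]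
        (by intro i; fin_cases i <;> simp [hrsm _ _ hFm])
        (by
          intro i j hij x
          have h2 := hrsd A B hAB x
          have h3 := h2.symm
          fin_cases i <;> fin_cases j <;> simp_all)
        (by
          simp only [Fin.sum_univ_two, Matrix.cons_val_zero, Matrix.cons_val_one]
          rw [hrsadd A B hAB]
          exact hrsfin F _ hFm hFfin)
      simp only [Fin.sum_univ_two, Matrix.cons_val_zero, Matrix.cons_val_one] at h1
      rw [hrsadd A B hAB] at h1
      simp only [φ]
      rw [hpow _ ENNReal.toReal_nonneg, hpow _ ENNReal.toReal_nonneg,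
        hpow _ ENNReal.toReal_nonneg]
      exact h1)
  have huniv : φ Finset.univ = (X.N F).toReal ^ p := by
    have : rs F Finset.univ = F := by ext x; simp [rs]
    simp only [φ, this]
  rw [huniv] at hμ2
  refine hμ2.trans (mul_le_mul_of_nonneg_left ?_ (by positivity))
  set M := ∑ s, μ s with hM
  set W := (C / θ) ^ (θ / (1 + θ)) with hW
  -- level estimates
  let lv : Fin n → Fin (m + 1) → Finset (Fin n → Fin (m + 1)) := fun i j =>
    Finset.univ.filter fun s => s i = j
  let y : ℕ → ℝ := fun k => x0 * Real.exp (k * θ)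
  have hy0 : ∀ k, 0 < y k := fun k => by simp only [y]; positivity
  let ν : Fin n → Fin m → ℝ := fun i k => (X.N (rs (f i) (lv i k.succ))).toReal ^ p
  have hν0 : ∀ i k, 0 ≤ ν i k := fun i k => Real.rpow_nonneg ENNReal.toReal_nonneg _
  have hν1 : ∀ (i : Fin n) (k : Fin m), y k * β i * ∑ s ∈ lv i k.succ, μ s ≤ ν i k := by
    intro i k
    have hyβ : 0 < y k * β i := mul_pos (hy0 k) (hβ0 i)
    have h1 : X.N (fun x => (y k * β i) ^ (1 / p) * rs F (lv i k.succ) x) ≤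
        X.N (rs (f i) (lv i k.succ)) := by
      refine X.mono _ _ ((hrsm F _ hFm).const_mul _) (hrsm _ _ (hf i)) fun x => ?_
      simp only [rs]
      split_ifs with hx
      · have hx' : Kn x i = k + 1 := by
          have : κ x i = k.succ := (Finset.mem_filter.mp hx).2
          have := congrArg Fin.val this
          simpa [κ] using this
        have h2 := (hlev x i k hx').1
        have h3 : y k * β i ≤ (|f i x| / F x) ^ p := by
          have := (le_div_iff₀ (hβ0 i)).mp h2
          exact this
        have h4 := Real.rpow_le_rpow hyβ.le h3 (by positivity : 0 ≤ 1 / p)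
        rw [one_div, Real.rpow_rpow_inv (div_nonneg (abs_nonneg _) (hF0 x)) hp.ne', ← one_div] at h4
        rw [abs_mul, abs_of_nonneg (Real.rpow_nonneg hyβ.le _), abs_of_nonneg (hF0 x)]
        calc _ ≤ |f i x| / F x * F x := mul_le_mul_of_nonneg_right h4 (hF0 x)
          _ ≤ |f i x| := by
            rcases (hF0 x).eq_or_lt with h | h
            · rw [← h]; simp
            · rw [div_mul_cancel₀ _ h.ne']
      · simp
    rw [X.smul _ _ (hrsm F _ hFm), abs_of_nonneg (Real.rpow_nonneg hyβ.le _)] at h1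
    have h2 := ENNReal.toReal_mono (hrsfin (f i) _ (hf i) (hfin i)).ne h1
    rw [ENNReal.toReal_mul, ENNReal.toReal_ofReal (Real.rpow_nonneg hyβ.le _)] at h2
    have h3 := Real.rpow_le_rpow (mul_nonneg (Real.rpow_nonneg hyβ.le _) ENNReal.toReal_nonneg)
      h2 hp.le
    rw [Real.mul_rpow (Real.rpow_nonneg hyβ.le _) ENNReal.toReal_nonneg, one_div,
      Real.rpow_inv_rpow hyβ.le hp.ne'] at h3
    exact (mul_le_mul_of_nonneg_left (hμ1 (lv i k.succ)) hyβ.le).trans h3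
  have hν2 : ∀ i, ∑ k, ν i k ^ Q ≤ b i ^ Q := by
    intro i
    have hle : ∀ x, |∑ k : Fin m, rs (f i) (lv i k.succ) x| ≤ |f i x| := by
      intro x
      have e : ∑ k : Fin m, rs (f i) (lv i k.succ) x =
          ∑ k : Fin m, if κ x i = k.succ then f i x else 0 := by
        simp [rs, lv]
      rw [e]
      by_cases hz : ∃ k : Fin m, κ x i = k.succ
      · obtain ⟨k, hk⟩ := hz
        rw [hk]
        simp
      · push Not at hz
        simp [hz]
    have hms : Measurable fun x => ∑ k : Fin m, rs (f i) (lv i k.succ) x :=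
      Finset.measurable_sum _ fun k _ => hrsm _ _ (hf i)
    have hmono := X.mono _ _ hms (hf i) hle
    have h1 := rcb_low X q hq0 hL m (fun k => rs (f i) (lv i k.succ))
      (fun k => hrsm _ _ (hf i))
      (by
        intro k k' hkk x
        simp only [rs, lv, Finset.mem_filter, Finset.mem_univ, true_and]
        by_cases h1 : κ x i = k.succ
        · right
          rw [if_neg]
          rw [h1]
          intro h2
          exact hkk (Fin.succ_injective _ h2)
        · left; rw [if_neg h1])
      (lt_of_le_of_lt hmono (hfin i))
    have h2 := ENNReal.toReal_mono (hfin i).ne hmono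
    calc ∑ k, ν i k ^ Q = ∑ k : Fin m, (X.N (rs (f i) (lv i k.succ))).toReal ^ q :=
          Finset.sum_congr rfl fun k _ => hpow _ ENNReal.toReal_nonneg
      _ ≤ _ := h1
      _ ≤ (X.N (f i)).toReal ^ q := Real.rpow_le_rpow ENNReal.toReal_nonneg h2 hq0.le
      _ = ((X.N (f i)).toReal ^ p) ^ Q := (hpow _ ENNReal.toReal_nonneg).symm
      _ ≤ b i ^ Q := Real.rpow_le_rpow (Real.rpow_nonneg ENNReal.toReal_nonneg _) (hNb i)
          (by positivity)
  have hν3 : ∀ i, ∑ k : Fin m, w k * ν i k ≤ W * b i := by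
    intro i
    have hpq : Real.HolderConjugate ((1 + θ) / θ) Q := by
      rw [Real.holderConjugate_iff]
      constructor
      · rw [lt_div_iff₀ hθ0]; linarith
      · rw [hQ]; field_simp; ring
    have h1 := Real.inner_le_Lp_mul_Lq_of_nonneg Finset.univ hpq (f := fun k : Fin m => w k)
      (g := ν i) (fun k _ => hw0 k) (fun k _ => hν0 i k)
    refine h1.trans (mul_le_mul ?_ ?_ (by
      exact Real.rpow_nonneg (Finset.sum_nonneg fun k _ => Real.rpow_nonneg (hν0 i k) _) _)
      (by positivity))
    · rw [hW, one_div_div]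
      refine Real.rpow_le_rpow (Finset.sum_nonneg fun k _ => Real.rpow_nonneg (hw0 k) _) ?_
        (by positivity)
      have := hwsum m
      rwa [Finset.sum_range] at this
    · have := Real.rpow_le_rpow (Finset.sum_nonneg fun k _ => Real.rpow_nonneg (hν0 i k) _)
        (hν2 i) (by positivity : 0 ≤ 1 / Q)
      refine this.trans (le_of_eq ?_)
      rw [one_div, Real.rpow_rpow_inv (hb i).le (by positivity)]
  -- pointwise estimate
  let wh : Fin (m + 1) → ℝ := Fin.cases 0 fun k : Fin m => w k * y k
  have hpt : ∀ s, μ s ≤ μ s * ∑ i, β i ^ R * ((1 - R) + R * (Real.exp θ * wh (s i))) := by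
    intro s
    rcases (hμ0 s).eq_or_lt with h | h
    · rw [← h]; simp
    refine le_mul_of_one_le_right h.le ?_
    obtain ⟨x, hxs, hxF⟩ : ∃ x, κ x = s ∧ 0 < F x := by
      by_contra hc
      push Not at hc
      have : rs F {s} = fun _ => 0 := by
        ext x
        simp only [rs, Finset.mem_singleton]
        split_ifs with hx
        · exact le_antisymm (hc x hx) (hF0 x)
        · rfl
      have h1 := hμ1 {s}
      simp only [φ, this, rcb_zero X, Finset.sum_singleton] at h1
      rw [ENNReal.toReal_zero, Real.zero_rpow hp.ne'] at h1
      linarith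
    have e1 : (1:ℝ) = ∑ i, β i ^ R * ξ i x ^ R := by
      have : ∀ i, β i ^ R * ξ i x ^ R = |f i x| ^ r / F x ^ r := by
        intro i
        rw [← Real.mul_rpow (hβ0 i).le (hξ0 i x)]
        simp only [ξ]
        rw [mul_div_cancel₀ _ (hβ0 i).ne', ← Real.rpow_mul (div_nonneg (abs_nonneg _) (hF0 x)),
          hRp, mul_div_cancel₀ _ hp.ne', Real.div_rpow (abs_nonneg _) (hF0 x)]
      simp_rw [this]
      rw [← Finset.sum_div, ← hFr, div_self (Real.rpow_pos_of_pos hxF r).ne']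
    refine e1.trans_le ?_
    refine Finset.sum_le_sum fun i _ => mul_le_mul_of_nonneg_left ?_ (Real.rpow_nonneg (hβ0 i).le _)
    have hki : (s i : ℕ) = Kn x i := by rw [← hxs]
    rcases Fin.eq_zero_or_eq_succ (s i) with hz | ⟨k, hk⟩
    · have h0 : Kn x i = 0 := by rw [← hki, hz]; rfl
      have := hsc0 _ (hξ0 i x) (hlev0 x i h0)
      rw [hz]
      simpa [wh] using this
    · have h0 : Kn x i = k + 1 := by rw [← hki, hk]; rfl
      obtain ⟨h1, h2⟩ := hlev x i k h0
      rw [hk]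
      exact hsc k _ h1 h2
  have hfib : ∀ i, ∑ s, μ s * wh (s i) ≤ W * Sgs := by
    intro i
    have e1 : ∑ s, μ s * wh (s i) = ∑ j, ∑ s ∈ lv i j, μ s * wh (s i) := by
      simp only [lv]
      exact (Finset.sum_fiberwise _ _ _).symm
    have e2 : ∀ j, ∑ s ∈ lv i j, μ s * wh (s i) = wh j * ∑ s ∈ lv i j, μ s := by
      intro j
      rw [Finset.mul_sum]
      refine Finset.sum_congr rfl fun s hs => ?_
      rw [(Finset.mem_filter.mp hs).2, mul_comm]
    simp_rw [e1, e2]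
    rw [Fin.sum_univ_succ]
    have h1 : wh 0 = 0 := rfl
    rw [h1, zero_mul, zero_add]
    calc _ ≤ ∑ k : Fin m, w k * ν i k / β i := by
          refine Finset.sum_le_sum fun k _ => ?_
          rw [le_div_iff₀ (hβ0 i)]
          have h2 : wh k.succ = w k * y k := rfl
          rw [h2]
          have := mul_le_mul_of_nonneg_left (hν1 i k) (hw0 k)
          calc _ = w k * (y k * β i * ∑ s ∈ lv i k.succ, μ s) := by ring
            _ ≤ _ := this
      _ = (∑ k : Fin m, w k * ν i k) / β i := by rw [Finset.sum_div]
      _ ≤ W * b i / β i := div_le_div_of_nonneg_right (hν3 i) (hβ0 i).le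
      _ = W * Sgs := by
          simp only [β]
          have := (hb i).ne'
          have := hSg0.ne'
          field_simp
  have hfinal : M ≤ (1 - R) * M + R * (Real.exp θ * (W * Sgs)) := by
    calc M ≤ ∑ s, μ s * ∑ i, β i ^ R * ((1 - R) + R * (Real.exp θ * wh (s i))) :=
          Finset.sum_le_sum fun s _ => hpt s
      _ = ∑ i, β i ^ R * ((1 - R) * M + R * (Real.exp θ * ∑ s, μ s * wh (s i))) := by
          simp_rw [Finset.mul_sum]
          rw [Finset.sum_comm]
          refine Finset.sum_congr rfl fun i _ => ?_
          rw [hM, Finset.mul_sum, ← Finset.sum_add_distrib, Finset.mul_sum]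
          refine Finset.sum_congr rfl fun s _ => ?_
          ring
      _ ≤ ∑ i, β i ^ R * ((1 - R) * M + R * (Real.exp θ * (W * Sgs))) := by
          refine Finset.sum_le_sum fun i _ => mul_le_mul_of_nonneg_left ?_
            (Real.rpow_nonneg (hβ0 i).le _)
          have := mul_le_mul_of_nonneg_left (mul_le_mul_of_nonneg_left (hfib i)
            (Real.exp_pos θ).le) hR0.le
          linarith
      _ = _ := by rw [← Finset.sum_mul, hβsum, one_mul]
  have : R * M ≤ R * (Real.exp θ * (W * Sgs)) := by linarith
  have := le_of_mul_le_mul_left this hR0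
  linarith

/-- For `0 < r < p < ∞` there is a constant `c = c(r,p)` such that any
admissible quasinorm with an (exact) upper `p`-estimate and lower `q`-estimate, where
`q/p = 1 + θ` and `0 < θ < 1`, has `r`-convexity constant `M^{(r)}(X)` with
`log M^{(r)}(X) ≤ θ (c + (1/p)|log θ|)`; i.e. the `r`-convexity inequality holds with
constant `exp (θ (c + |log θ|/p))`. -/
theorem rConvexity_constant_bound
    (r p : ℝ) (hr : 0 < r) (hrp : r < p) :
    ∃ c : ℝ,
      ∀ (Ω : Type) [TopologicalSpace Ω] [CompactSpace Ω] [T2Space Ω]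
        [MeasurableSpace Ω] [BorelSpace Ω]
        (X : AdmissibleQuasinorm Ω) (q θ : ℝ),
        0 < θ → θ < 1 → q / p = 1 + θ →
        CrudeUpper X p 1 → CrudeLower X q 1 →
        ∀ (n : ℕ) (f : Fin n → Ω → ℝ), (∀ i, Measurable (f i)) →
          (∀ i, X.N (f i) < ⊤) →
          X.N (fun x => (∑ i, |f i x| ^ r) ^ (1 / r)) ≤
            ENNReal.ofReal (Real.exp (θ * (c + |Real.log θ| / p))) *
              (∑ i, X.N (f i) ^ r) ^ (1 / r) := by
  have hp : 0 < p := hr.trans hrp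
  have hR0 : 0 < r / p := div_pos hr hp
  have hR1 : r / p < 1 := (div_lt_one hp).mpr hrp
  obtain ⟨C, x0, hC, hx0, hsc0, hall⟩ := rcb_scalar (r / p) hR0 hR1
  refine ⟨(3 + Real.log C) / p, ?_⟩
  intro Ω _ _ _ _ _ X q θ hθ0 hθ1 hqp hU hL n f hf hfin
  have hq : q = p * (1 + θ) := by rw [← hqp]; field_simp
  obtain ⟨w, hw0, hsc, hwsum⟩ := hall θ hθ0 hθ1
  have hFfin := rcb_fin X p r hp hr hU Finset.univ f hf hfin
  rcases Nat.eq_zero_or_pos n with hn | hn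
  · subst hn
    have : (fun x : Ω => (∑ i : Fin 0, |f i x| ^ r) ^ (1 / r)) = fun _ => 0 := by
      ext x; simp [Real.zero_rpow (inv_pos.mpr hr).ne']
    rw [this, rcb_zero X]
    exact zero_le
  set K := Real.exp (θ * ((3 + Real.log C) / p + |Real.log θ| / p)) with hK
  have hK0 : 0 < K := Real.exp_pos _
  have hKp : (1 + θ) ^ 2 * (Real.exp θ * (C / θ) ^ (θ / (1 + θ))) ≤ K ^ p := by
    have h1 : (1 + θ) ^ 2 ≤ Real.exp (2 * θ) := by
      have := Real.add_one_le_exp θ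
      rw [two_mul, Real.exp_add, ← pow_two]
      gcongr
      linarith
    have hCθ : 1 ≤ C / θ := by rw [le_div_iff₀ hθ0]; linarith
    have h2 : (C / θ) ^ (θ / (1 + θ)) ≤ (C / θ) ^ θ :=
      Real.rpow_le_rpow_of_exponent_le hCθ (div_le_self hθ0.le (by linarith))
    have h3 : (C / θ) ^ θ = Real.exp (θ * (Real.log C + |Real.log θ|)) := by
      rw [Real.rpow_def_of_pos (by positivity), Real.log_div (by positivity) hθ0.ne',
        abs_of_neg (Real.log_neg hθ0 hθ1)]
      congr 1; ring
    calc _ ≤ Real.exp (2 * θ) * (Real.exp θ * Real.exp (θ * (Real.log C + |Real.log θ|))) := by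
          rw [← h3]; gcongr
      _ = K ^ p := by
          rw [hK, ← Real.exp_mul, ← Real.exp_add, ← Real.exp_add]
          congr 1; field_simp; ring
  set T := (X.N (fun x => (∑ i, |f i x| ^ r) ^ (1 / r))).toReal with hT
  have hT0 : 0 ≤ T := ENNReal.toReal_nonneg
  have hε : ∀ ε : ℝ, 0 < ε → T ≤ K * (∑ i, ((X.N (f i)).toReal + ε) ^ r) ^ (1 / r) := by
    intro ε hε
    have ha : ∀ i, 0 < (X.N (f i)).toReal + ε := fun i => by
      have : 0 ≤ (X.N (f i)).toReal := ENNReal.toReal_nonneg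
      linarith
    have h := rcb_bound X r p (r / p) q θ C x0 hr hp rfl hR0 hR1 hθ0 hq hC hx0 hsc0 w hw0 hsc hwsum
      hU hL n hn f hf hfin (fun i => ((X.N (f i)).toReal + ε) ^ p)
      (fun i => Real.rpow_pos_of_pos (ha i) p)
      (fun i => Real.rpow_le_rpow ENNReal.toReal_nonneg (by linarith) hp.le)
    have e1 : ∀ i, (((X.N (f i)).toReal + ε) ^ p) ^ (r / p) = ((X.N (f i)).toReal + ε) ^ r := by
      intro i
      rw [← Real.rpow_mul (ha i).le, mul_div_cancel₀ _ hp.ne']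
    simp_rw [e1] at h
    have hs : 0 ≤ ∑ i, ((X.N (f i)).toReal + ε) ^ r :=
      Finset.sum_nonneg fun i _ => Real.rpow_nonneg (ha i).le _
    have e2 : (∑ i, ((X.N (f i)).toReal + ε) ^ r) ^ (1 / (r / p)) =
        ((∑ i, ((X.N (f i)).toReal + ε) ^ r) ^ (1 / r)) ^ p := by
      rw [← Real.rpow_mul hs]; congr 1; field_simp
    rw [e2] at h
    have hS : 0 ≤ (∑ i, ((X.N (f i)).toReal + ε) ^ r) ^ (1 / r) := Real.rpow_nonneg hs _
    refine (Real.rpow_le_rpow_iff hT0 (mul_nonneg hK0.le hS) hp).mp ?_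
    rw [Real.mul_rpow hK0.le hS]
    refine h.trans ?_
    rw [← mul_assoc]
    exact mul_le_mul_of_nonneg_right hKp (Real.rpow_nonneg hS _)
  have hlim : T ≤ K * (∑ i, (X.N (f i)).toReal ^ r) ^ (1 / r) := by
    have hc : Continuous fun ε : ℝ => K * (∑ i, ((X.N (f i)).toReal + ε) ^ r) ^ (1 / r) := by
      refine continuous_const.mul (Continuous.rpow_const ?_ fun _ => Or.inr (by positivity))
      exact continuous_finsetSum _ fun i _ =>
        (continuous_const.add continuous_id).rpow_const fun _ => Or.inr hr.le
    have ht := (hc.tendsto 0).mono_left (nhdsWithin_le_nhds (s := Ioi 0))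
    simp only [add_zero] at ht
    exact ge_of_tendsto ht (eventually_nhdsWithin_of_forall fun ε h => hε ε h)
  rw [← ENNReal.ofReal_toReal hFfin.ne]
  refine (ENNReal.ofReal_le_ofReal hlim).trans (le_of_eq ?_)
  have hs : 0 ≤ ∑ i, (X.N (f i)).toReal ^ r :=
    Finset.sum_nonneg fun i _ => Real.rpow_nonneg ENNReal.toReal_nonneg _
  rw [ENNReal.ofReal_mul hK0.le, ← ENNReal.ofReal_rpow_of_nonneg hs (by positivity),
    ENNReal.ofReal_sum_of_nonneg fun i _ => Real.rpow_nonneg ENNReal.toReal_nonneg _]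
  congr 3
  ext1 i
  rw [← ENNReal.ofReal_rpow_of_nonneg ENNReal.toReal_nonneg hr.le,
    ENNReal.ofReal_toReal (hfin i).ne]
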